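/- Let N ≥ 1 and let θ1, θ2, θ3 be real numbers that are pairwise distinct modulo 2π. Then J(iθ1,iθ2;−iθ3) + J(iθ1,iθ3;−iθ2) + J(iθ2,iθ3;−iθ1) + J(−iθ1,−iθ2;iθ3) + J(−iθ1,−iθ3;iθ2) + J(−iθ2,−iθ3;iθ1) + N( J(−iθ1;iθ3) + J(−iθ2;iθ3) + J(−iθ1;iθ2) + J(−iθ3;iθ2) + J(−iθ2;iθ1) + J(−iθ3;iθ1) ) + N^3 = det_{3×3} ( S_N(θ_k − θ_j) )_{1≤j,k≤3}, where S_N(θ) := sin(Nθ/2)/sin(θ/2) (with S_N(0) := N); in particular the left-hand side extends to an entire function of (θ1,θ2,θ3). -/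

import Mathlib

open Complex Real

noncomputable section

open scoped Classical

/-- `z(x) = 1/(1 − e^{−x})`. -/
def zf (x : ℂ) : ℂ := (1 - Complex.exp (-x))⁻¹

/-- The logarithmic derivative `z'/z`. -/
def zl (x : ℂ) : ℂ := deriv zf x / zf x

/-- `J(α;β) = (z'/z)'(α+β) + e^{−N(α+β)} z(α+β) z(−α−β)`. -/
def Jb (N : ℕ) (α β : ℂ) : ℂ :=
  deriv zl (α + β) + Complex.exp (-(N : ℂ) * (α + β)) * zf (α + β) * zf (-α - β)

/-- `J(α1,α2;β)`, the three-variable closed-form expression. -/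
def Ja (N : ℕ) (α1 α2 β : ℂ) : ℂ :=
  Complex.exp (-(N : ℂ) * (α1 + β)) * zf (α1 + β) * zf (-α1 - β) *
      (zl (α2 - α1) - zl (α2 + β)) +
    Complex.exp (-(N : ℂ) * (α2 + β)) * zf (α2 + β) * zf (-α2 - β) *
      (zl (α1 - α2) - zl (α1 + β))

/-- The sum of all the `J`-terms appearing in the triple correlation formula for `U(N)`,
as a function of complex angles `θ1, θ2, θ3`. -/
def Jsum (N : ℕ) (θ1 θ2 θ3 : ℂ) : ℂ :=
  Ja N (Complex.I * θ1) (Complex.I * θ2) (-(Complex.I * θ3)) +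
    Ja N (Complex.I * θ1) (Complex.I * θ3) (-(Complex.I * θ2)) +
    Ja N (Complex.I * θ2) (Complex.I * θ3) (-(Complex.I * θ1)) +
    Ja N (-(Complex.I * θ1)) (-(Complex.I * θ2)) (Complex.I * θ3) +
    Ja N (-(Complex.I * θ1)) (-(Complex.I * θ3)) (Complex.I * θ2) +
    Ja N (-(Complex.I * θ2)) (-(Complex.I * θ3)) (Complex.I * θ1) +
    (N : ℂ) * (Jb N (-(Complex.I * θ1)) (Complex.I * θ3) +
      Jb N (-(Complex.I * θ2)) (Complex.I * θ3) +
      Jb N (-(Complex.I * θ1)) (Complex.I * θ2) +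
      Jb N (-(Complex.I * θ3)) (Complex.I * θ2) +
      Jb N (-(Complex.I * θ2)) (Complex.I * θ1) +
      Jb N (-(Complex.I * θ3)) (Complex.I * θ1)) +
    (N : ℂ) ^ 3

/-- The sine kernel `S_N(θ) = sin(Nθ/2)/sin(θ/2)`, with `S_N(0) := N`. -/
def SN (N : ℕ) (x : ℝ) : ℝ :=
  if Real.sin (x / 2) = 0 then (N : ℝ) else Real.sin (N * x / 2) / Real.sin (x / 2)


lemma zl_eq (x : ℂ) : zl x = -(Complex.exp x - 1)⁻¹ := by
  unfold zl
  by_cases h : Complex.exp x = 1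
  · have : zf x = 0 := by simp [zf, Complex.exp_neg, h]
    rw [this, h]; simp
  · have h0 := Complex.exp_ne_zero x
    have h1 : Complex.exp x - 1 ≠ 0 := sub_ne_zero.mpr h
    have h2 : 1 - Complex.exp (-x) ≠ 0 := by
      rw [Complex.exp_neg]
      intro h3
      apply h1
      field_simp at h3
      simpa using h3
    have hd : HasDerivAt zf (-(-(Complex.exp (-x) * (-1))) / (1 - Complex.exp (-x)) ^ 2) x := by
      have := (((hasDerivAt_neg x).cexp).const_sub 1).fun_inv h2
      exact this
    rw [hd.deriv, zf]
    have h4 : 1 - (Complex.exp x)⁻¹ ≠ 0 := by rwa [Complex.exp_neg] at h2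
    rw [Complex.exp_neg] at *
    field_simp

lemma deriv_zl (x : ℂ) (h : Complex.exp x ≠ 1) :
    deriv zl x = Complex.exp x / (Complex.exp x - 1) ^ 2 := by
  have h1 : Complex.exp x - 1 ≠ 0 := sub_ne_zero.mpr h
  have e : zl = fun x => -(Complex.exp x - 1)⁻¹ := funext zl_eq
  rw [e]
  have := ((((Complex.hasDerivAt_exp x).sub_const 1).fun_inv h1).fun_neg)
  rw [this.deriv]
  ring

lemma zfzf (a c : ℂ) (h : Complex.exp a ≠ Complex.exp c) :
    zf (a - c) * zf (-(a - c)) =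
      -(Complex.exp a * Complex.exp c) / (Complex.exp a - Complex.exp c) ^ 2 := by
  have ha := Complex.exp_ne_zero a
  have hc := Complex.exp_ne_zero c
  have h1 : Complex.exp a - Complex.exp c ≠ 0 := sub_ne_zero.mpr h
  have h2 : Complex.exp c - Complex.exp a ≠ 0 := sub_ne_zero.mpr h.symm
  unfold zf
  rw [neg_neg, neg_sub, Complex.exp_sub, Complex.exp_sub]
  rw [one_sub_div ha, one_sub_div hc]
  field_simp
  ring

lemma zl_sub (a c : ℂ) (h : Complex.exp a ≠ Complex.exp c) :
    zl (a - c) = -Complex.exp c / (Complex.exp a - Complex.exp c) := by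
  have hc := Complex.exp_ne_zero c
  have h1 : Complex.exp a - Complex.exp c ≠ 0 := sub_ne_zero.mpr h
  rw [zl_eq, Complex.exp_sub, div_sub_one hc]
  field_simp

lemma expN (N : ℕ) (a c : ℂ) :
    Complex.exp (-(N : ℂ) * (a - c)) = Complex.exp (N * c) / Complex.exp (N * a) := by
  rw [← Complex.exp_sub]; congr 1; ring

lemma Ja_eq (N : ℕ) (a b c : ℂ) (hab : Complex.exp a ≠ Complex.exp b)
    (hac : Complex.exp a ≠ Complex.exp c) (hbc : Complex.exp b ≠ Complex.exp c) :
    Ja N a b (-c) =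
      Complex.exp (N * c) / Complex.exp (N * a) *
        (-(Complex.exp a * Complex.exp c) / (Complex.exp a - Complex.exp c) ^ 2) *
        (-Complex.exp a / (Complex.exp b - Complex.exp a)
          - -Complex.exp c / (Complex.exp b - Complex.exp c)) +
      Complex.exp (N * c) / Complex.exp (N * b) *
        (-(Complex.exp b * Complex.exp c) / (Complex.exp b - Complex.exp c) ^ 2) *
        (-Complex.exp b / (Complex.exp a - Complex.exp b)
          - -Complex.exp c / (Complex.exp a - Complex.exp c)) := by
  unfold Ja
  have e1 : -a - -c = -(a - c) := by ring
  have e2 : -b - -c = -(b - c) := by ring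
  simp only [← sub_eq_add_neg]
  rw [e1, e2, mul_assoc _ (zf (a - c)), mul_assoc _ (zf (b - c)), zfzf _ _ hac, zfzf _ _ hbc,
    expN, expN, zl_sub _ _ hab, zl_sub _ _ hab.symm, zl_sub _ _ hac, zl_sub _ _ hbc]

lemma exp_neg_ne {a b : ℂ} (h : Complex.exp a ≠ Complex.exp b) :
    Complex.exp (-a) ≠ Complex.exp (-b) := by
  rw [Complex.exp_neg, Complex.exp_neg]
  exact fun h' => h (inv_injective h')

lemma flipq {x y : ℂ} (hx : x ≠ 0) (hy : y ≠ 0) (h : x ≠ y) :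
    -x⁻¹ / (y⁻¹ - x⁻¹) = -y / (x - y) := by
  have h1 : x - y ≠ 0 := sub_ne_zero.mpr h
  rw [inv_sub_inv hy hx]
  field_simp

lemma flips {x y : ℂ} (hx : x ≠ 0) (hy : y ≠ 0) (h : x ≠ y) :
    -(x⁻¹ * y⁻¹) / (x⁻¹ - y⁻¹) ^ 2 = -(x * y) / (x - y) ^ 2 := by
  have h1 : x - y ≠ 0 := sub_ne_zero.mpr h
  have h2 : y - x ≠ 0 := sub_ne_zero.mpr h.symm
  rw [inv_sub_inv hx hy]
  field_simp
  ring

lemma Ja_neg (N : ℕ) (a b c : ℂ) (hab : Complex.exp a ≠ Complex.exp b)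
    (hac : Complex.exp a ≠ Complex.exp c) (hbc : Complex.exp b ≠ Complex.exp c) :
    Ja N (-a) (-b) c =
      Complex.exp (N * a) / Complex.exp (N * c) *
        (-(Complex.exp a * Complex.exp c) / (Complex.exp a - Complex.exp c) ^ 2) *
        (-Complex.exp b / (Complex.exp a - Complex.exp b)
          - -Complex.exp b / (Complex.exp c - Complex.exp b)) +
      Complex.exp (N * b) / Complex.exp (N * c) *
        (-(Complex.exp b * Complex.exp c) / (Complex.exp b - Complex.exp c) ^ 2) *
        (-Complex.exp a / (Complex.exp b - Complex.exp a)
          - -Complex.exp a / (Complex.exp c - Complex.exp a)) := by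
  have := Ja_eq N (-a) (-b) (-c) (exp_neg_ne hab) (exp_neg_ne hac) (exp_neg_ne hbc)
  rw [neg_neg] at this
  rw [this]
  have ha := Complex.exp_ne_zero a
  have hb := Complex.exp_ne_zero b
  have hc := Complex.exp_ne_zero c
  rw [mul_neg, mul_neg, mul_neg]
  simp only [Complex.exp_neg]
  rw [flipq ha hb hab, flipq hb ha hab.symm, flipq hc hb hbc.symm, flipq hc ha hac.symm,
    flips ha hc hac, flips hb hc hbc, inv_div_inv, inv_div_inv]

lemma Jb_eq (N : ℕ) (a c : ℂ) (hac : Complex.exp a ≠ Complex.exp c) :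
    Jb N (-a) c = (1 - Complex.exp (N * a) / Complex.exp (N * c)) *
      (Complex.exp a * Complex.exp c / (Complex.exp a - Complex.exp c) ^ 2) := by
  unfold Jb
  have ha := Complex.exp_ne_zero a
  have hc := Complex.exp_ne_zero c
  have h1 : Complex.exp a - Complex.exp c ≠ 0 := sub_ne_zero.mpr hac
  have h2 : Complex.exp c - Complex.exp a ≠ 0 := sub_ne_zero.mpr hac.symm
  have e0 : -a + c = c - a := by ring
  have e1 : - -a - c = -(c - a) := by ring
  rw [e0, e1, mul_assoc, zfzf _ _ hac.symm, expN, deriv_zl, Complex.exp_sub, div_sub_one ha]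
  · field_simp
    ring
  · rw [Complex.exp_sub]
    intro h
    exact hac ((div_eq_one_iff_eq ha).mp h).symm

/-- ratio of sines -/
def Sr (N : ℕ) (s t : ℂ) : ℂ := Complex.sin (N * (s - t) / 2) / Complex.sin ((s - t) / 2)

lemma sin_half (s t : ℂ) : Complex.sin ((s - t) / 2) =
    (Complex.exp (Complex.I * t) - Complex.exp (Complex.I * s)) *
      (Complex.exp (-(Complex.I * (s + t) / 2)) * Complex.I / 2) := by
  have e1 : Complex.exp (-((s - t) / 2) * Complex.I) =
      Complex.exp (Complex.I * t) * Complex.exp (-(Complex.I * (s + t) / 2)) := by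
    rw [← Complex.exp_add]; congr 1; ring
  have e2 : Complex.exp ((s - t) / 2 * Complex.I) =
      Complex.exp (Complex.I * s) * Complex.exp (-(Complex.I * (s + t) / 2)) := by
    rw [← Complex.exp_add]; congr 1; ring
  rw [Complex.sin, e1, e2]
  ring

lemma Sr_eq (N : ℕ) (s t : ℂ) : Sr N s t =
    (Complex.exp (N * (Complex.I * s)) - Complex.exp (N * (Complex.I * t))) /
      (Complex.exp (Complex.I * s) - Complex.exp (Complex.I * t)) *
      (Complex.exp (-(N * (Complex.I * (s + t)) / 2)) / Complex.exp (-(Complex.I * (s + t) / 2)))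
      := by
  have h := sin_half (N * s) (N * t)
  rw [Sr, mul_sub, h, sin_half]
  have e1 : Complex.I * (N * t) = N * (Complex.I * t) := by ring
  have e2 : Complex.I * (N * s) = N * (Complex.I * s) := by ring
  have e3 : Complex.I * (N * s + N * t) = N * (Complex.I * (s + t)) := by ring
  rw [e1, e2, e3, mul_div_mul_comm, mul_div_assoc _ Complex.I, mul_div_assoc _ Complex.I,
    mul_div_mul_right _ _ (div_ne_zero Complex.I_ne_zero two_ne_zero),
    ← neg_sub (Complex.exp (N * (Complex.I * s))), ← neg_sub (Complex.exp (Complex.I * s)),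
    neg_div_neg_eq]

lemma half_sq (x y : ℂ) : Complex.exp (-((x + y) / 2)) ^ 2 =
    (Complex.exp x * Complex.exp y)⁻¹ := by
  rw [← Complex.exp_nat_mul, ← Complex.exp_add, ← Complex.exp_neg]
  congr 1; push_cast; ring

lemma half_prod (x y z : ℂ) : Complex.exp (-((x + y) / 2)) * Complex.exp (-((y + z) / 2)) *
    Complex.exp (-((x + z) / 2)) =
    (Complex.exp x * Complex.exp y * Complex.exp z)⁻¹ := by
  simp only [← Complex.exp_add, ← Complex.exp_neg]
  congr 1; ring

lemma Sr_sq (N : ℕ) (s t : ℂ) : Sr N s t ^ 2 =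
    (Complex.exp (N * (Complex.I * s)) - Complex.exp (N * (Complex.I * t))) ^ 2 /
      (Complex.exp (Complex.I * s) - Complex.exp (Complex.I * t)) ^ 2 *
      ((Complex.exp (Complex.I * s) * Complex.exp (Complex.I * t)) /
      (Complex.exp (N * (Complex.I * s)) * Complex.exp (N * (Complex.I * t)))) := by
  have e1 := half_sq (Complex.I * s) (Complex.I * t)
  have e2 := half_sq (N * (Complex.I * s)) (N * (Complex.I * t))
  rw [Sr_eq, mul_pow, div_pow, div_pow]
  simp only [mul_add] at *
  rw [e1, e2, inv_div_inv]

lemma Sr_prod (N : ℕ) (s t r : ℂ) : Sr N s t * Sr N t r * Sr N s r =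
    ((Complex.exp (N * (Complex.I * s)) - Complex.exp (N * (Complex.I * t))) /
      (Complex.exp (Complex.I * s) - Complex.exp (Complex.I * t))) *
    ((Complex.exp (N * (Complex.I * t)) - Complex.exp (N * (Complex.I * r))) /
      (Complex.exp (Complex.I * t) - Complex.exp (Complex.I * r))) *
    ((Complex.exp (N * (Complex.I * s)) - Complex.exp (N * (Complex.I * r))) /
      (Complex.exp (Complex.I * s) - Complex.exp (Complex.I * r))) *
      ((Complex.exp (Complex.I * s) * Complex.exp (Complex.I * t) * Complex.exp (Complex.I * r)) /
      (Complex.exp (N * (Complex.I * s)) * Complex.exp (N * (Complex.I * t)) *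
        Complex.exp (N * (Complex.I * r)))) := by
  have e1 := half_prod (Complex.I * s) (Complex.I * t) (Complex.I * r)
  have e2 := half_prod (N * (Complex.I * s)) (N * (Complex.I * t)) (N * (Complex.I * r))
  rw [← inv_div_inv (Complex.exp (N * (Complex.I * s)) * Complex.exp (N * (Complex.I * t)) *
      Complex.exp (N * (Complex.I * r))), ← e1, ← e2]
  simp only [Sr_eq, mul_add]
  ring

lemma coefA (u v w : ℂ) (h1 : u - v ≠ 0) (h2 : v - w ≠ 0) (h3 : u - w ≠ 0) :
    (-(u * w) / (u - w) ^ 2) * (-u / (v - u) - -w / (v - w))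
    + (-(w * u) / (w - u) ^ 2) * (-v / (w - v) - -v / (u - v))
    = -2 * (u * v * w) / ((u - v) * (v - w) * (u - w)) := by
  have h1' : v - u ≠ 0 := by rw [← neg_sub]; exact neg_ne_zero.mpr h1
  have h2' : w - v ≠ 0 := by rw [← neg_sub]; exact neg_ne_zero.mpr h2
  have h3' : w - u ≠ 0 := by rw [← neg_sub]; exact neg_ne_zero.mpr h3
  rw [div_sub_div _ _ h1' h2, div_sub_div _ _ h2' h1]
  have e1 : w - u = -(u - w) := by ring
  have e2 : v - u = -(u - v) := by ring
  have e3 : w - v = -(v - w) := by ring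
  rw [e1, e2, e3]
  field_simp
  ring

lemma algA (u v w U V W : ℂ) (hU : U ≠ 0) (hV : V ≠ 0) (hW : W ≠ 0)
    (h1 : u - v ≠ 0) (h2 : v - w ≠ 0) (h3 : u - w ≠ 0) :
    (W / U * (-(u * w) / (u - w) ^ 2) * (-u / (v - u) - -w / (v - w)) +
      W / V * (-(v * w) / (v - w) ^ 2) * (-v / (u - v) - -w / (u - w))) +
    (V / U * (-(u * v) / (u - v) ^ 2) * (-u / (w - u) - -v / (w - v)) +
      V / W * (-(w * v) / (w - v) ^ 2) * (-w / (u - w) - -v / (u - v))) +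
    (U / V * (-(v * u) / (v - u) ^ 2) * (-v / (w - v) - -u / (w - u)) +
      U / W * (-(w * u) / (w - u) ^ 2) * (-w / (v - w) - -u / (v - u))) +
    (U / W * (-(u * w) / (u - w) ^ 2) * (-v / (u - v) - -v / (w - v)) +
      V / W * (-(v * w) / (v - w) ^ 2) * (-u / (v - u) - -u / (w - u))) +
    (U / V * (-(u * v) / (u - v) ^ 2) * (-w / (u - w) - -w / (v - w)) +
      W / V * (-(w * v) / (w - v) ^ 2) * (-u / (w - u) - -u / (v - u))) +
    (V / U * (-(v * u) / (v - u) ^ 2) * (-w / (v - w) - -w / (u - w)) +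
      W / U * (-(w * u) / (w - u) ^ 2) * (-v / (w - v) - -v / (u - v)))
    = 2 * (((U - V) / (u - v)) * ((V - W) / (v - w)) * ((U - W) / (u - w)) *
        ((u * v * w) / (U * V * W))) := by
  have h1' : v - u ≠ 0 := by rw [← neg_sub]; exact neg_ne_zero.mpr h1
  have h2' : w - v ≠ 0 := by rw [← neg_sub]; exact neg_ne_zero.mpr h2
  have h3' : w - u ≠ 0 := by rw [← neg_sub]; exact neg_ne_zero.mpr h3
  have c1 := coefA u v w h1 h2 h3
  have c2 := coefA v u w h1' h3 h2
  have c3 := coefA u w v h3 h2' h1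
  have c4 := coefA w u v h3' h1 h2'
  have c5 := coefA v w u h2 h3' h1'
  have c6 := coefA w v u h2' h1' h3'
  have e1 : w - u = -(u - w) := by ring
  have e2 : v - u = -(u - v) := by ring
  have e3 : w - v = -(v - w) := by ring
  have key : 2 * (((U - V) / (u - v)) * ((V - W) / (v - w)) * ((U - W) / (u - w)) *
        ((u * v * w) / (U * V * W))) =
      W / U * (-2 * (u * v * w) / ((u - v) * (v - w) * (u - w))) +
      W / V * (-2 * (v * u * w) / ((v - u) * (u - w) * (v - w))) +
      V / U * (-2 * (u * w * v) / ((u - w) * (w - v) * (u - v))) +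
      V / W * (-2 * (w * u * v) / ((w - u) * (u - v) * (w - v))) +
      U / V * (-2 * (v * w * u) / ((v - w) * (w - u) * (v - u))) +
      U / W * (-2 * (w * v * u) / ((w - v) * (v - u) * (w - u))) := by
    rw [e1, e2, e3]
    field_simp
    ring
  rw [key, ← c1, ← c2, ← c3, ← c4, ← c5, ← c6]
  ring

lemma algB (u v U V : ℂ) (hU : U ≠ 0) (hV : V ≠ 0) :
    (1 - U / V) * (u * v / (u - v) ^ 2) + (1 - V / U) * (v * u / (v - u) ^ 2)
    = -((U - V) ^ 2 / (u - v) ^ 2 * ((u * v) / (U * V))) := by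
  have e : (v - u) ^ 2 = (u - v) ^ 2 := by ring
  rw [e]
  field_simp
  ring

lemma Jsum_eq (N : ℕ) (s t r : ℂ) (hst : Complex.exp (Complex.I * s) ≠ Complex.exp (Complex.I * t))
    (hsr : Complex.exp (Complex.I * s) ≠ Complex.exp (Complex.I * r))
    (htr : Complex.exp (Complex.I * t) ≠ Complex.exp (Complex.I * r)) :
    Jsum N s t r = (N : ℂ) ^ 3 - N * (Sr N s t ^ 2 + Sr N t r ^ 2 + Sr N s r ^ 2)
      + 2 * (Sr N s t * Sr N t r * Sr N s r) := by
  have A := algA _ _ _ _ _ _ (Complex.exp_ne_zero (N * (Complex.I * s)))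
    (Complex.exp_ne_zero (N * (Complex.I * t))) (Complex.exp_ne_zero (N * (Complex.I * r)))
    (sub_ne_zero.mpr hst) (sub_ne_zero.mpr htr) (sub_ne_zero.mpr hsr)
  have B1 := algB (Complex.exp (Complex.I * s)) (Complex.exp (Complex.I * t)) _ _
    (Complex.exp_ne_zero (N * (Complex.I * s))) (Complex.exp_ne_zero (N * (Complex.I * t)))
  have B2 := algB (Complex.exp (Complex.I * t)) (Complex.exp (Complex.I * r)) _ _
    (Complex.exp_ne_zero (N * (Complex.I * t))) (Complex.exp_ne_zero (N * (Complex.I * r)))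
  have B3 := algB (Complex.exp (Complex.I * s)) (Complex.exp (Complex.I * r)) _ _
    (Complex.exp_ne_zero (N * (Complex.I * s))) (Complex.exp_ne_zero (N * (Complex.I * r)))
  rw [← Sr_sq] at B1 B2 B3
  rw [← Sr_prod, ← Ja_eq N _ _ _ hst hsr htr, ← Ja_eq N _ _ _ hsr hst htr.symm,
    ← Ja_eq N _ _ _ htr hst.symm hsr.symm, ← Ja_neg N _ _ _ hst hsr htr,
    ← Ja_neg N _ _ _ hsr hst htr.symm, ← Ja_neg N _ _ _ htr hst.symm hsr.symm] at A
  rw [← Jb_eq N _ _ hst, ← Jb_eq N _ _ hst.symm] at B1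
  rw [← Jb_eq N _ _ htr, ← Jb_eq N _ _ htr.symm] at B2
  rw [← Jb_eq N _ _ hsr, ← Jb_eq N _ _ hsr.symm] at B3
  unfold Jsum
  linear_combination A + N * (B1 + B2 + B3)

lemma exp_ne_of (s t : ℝ) (h : ∀ m : ℤ, s - t ≠ 2 * π * m) :
    Complex.exp (Complex.I * s) ≠ Complex.exp (Complex.I * t) := by
  intro h'
  obtain ⟨n, hn⟩ := Complex.exp_eq_exp_iff_exists_int.mp h'
  apply h n
  have : Complex.I * ((s - t : ℝ) : ℂ) = Complex.I * ((2 * π * n : ℝ) : ℂ) := by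
    push_cast
    linear_combination hn
  exact_mod_cast mul_left_cancel₀ Complex.I_ne_zero this

lemma sin_ne_of (s t : ℝ) (h : ∀ m : ℤ, s - t ≠ 2 * π * m) : Real.sin ((s - t) / 2) ≠ 0 := by
  intro h'
  obtain ⟨n, hn⟩ := Real.sin_eq_zero_iff.mp h'
  exact h n (by linarith)

lemma SN_eq (N : ℕ) (s t : ℝ) (h : ∀ m : ℤ, s - t ≠ 2 * π * m) :
    ((SN N (s - t) : ℝ) : ℂ) = Sr N s t := by
  rw [SN, if_neg (sin_ne_of s t h), Sr]
  push_cast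
  rfl

lemma SN_neg (N : ℕ) (s t : ℝ) : SN N (t - s) = SN N (s - t) := by
  have e1 : (t - s) / 2 = -((s - t) / 2) := by ring
  have e2 : N * (t - s) / 2 = -(N * (s - t) / 2) := by ring
  rw [SN, SN, e1, e2, Real.sin_neg, Real.sin_neg, neg_div_neg_eq]
  simp only [neg_eq_zero]

lemma SN_zero (N : ℕ) : SN N 0 = N := by simp [SN]

/-- entire extension of the sine kernel -/
def SE (N : ℕ) (x : ℂ) : ℂ := (Polynomial.Chebyshev.U ℂ ((N : ℤ) - 1)).eval (Complex.cos (x / 2))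

lemma SE_diff (N : ℕ) : Differentiable ℂ (SE N) := by
  unfold SE
  exact (Polynomial.differentiable (𝕜 := ℂ) (Polynomial.Chebyshev.U ℂ ((N : ℤ) - 1))).comp
    (f := fun x : ℂ => Complex.cos (x / 2)) (by fun_prop)

lemma SE_eq (N : ℕ) (s t : ℝ) (h : ∀ m : ℤ, s - t ≠ 2 * π * m) :
    SE N ((s : ℂ) - t) = Sr N s t := by
  have h1 : Complex.sin (((s : ℂ) - t) / 2) ≠ 0 := by
    have := sin_ne_of s t h
    intro h2
    apply this
    exact_mod_cast h2
  rw [Sr, eq_div_iff h1, SE, Polynomial.Chebyshev.U_complex_cos]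
  congr 1
  push_cast
  ring

/-- For `θ1, θ2, θ3` pairwise distinct modulo `2π`, the sum of the `J`-terms equals
`det (S_N(θ_k − θ_j))`; in particular it extends to an entire function of `(θ1,θ2,θ3)`. -/
theorem stmt_17 (N : ℕ) (hN : 1 ≤ N) (t1 t2 t3 : ℝ)
    (h12 : ∀ m : ℤ, t1 - t2 ≠ 2 * π * m)
    (h13 : ∀ m : ℤ, t1 - t3 ≠ 2 * π * m)
    (h23 : ∀ m : ℤ, t2 - t3 ≠ 2 * π * m) :
    Jsum N t1 t2 t3 =
      ((Matrix.det (Matrix.of fun j k : Fin 3 =>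
          SN N ((![t1, t2, t3] k) - (![t1, t2, t3] j))) : ℝ) : ℂ) ∧
    ∃ F : ℂ × ℂ × ℂ → ℂ, Differentiable ℂ F ∧
      ∀ s1 s2 s3 : ℝ, (∀ m : ℤ, s1 - s2 ≠ 2 * π * m) →
        (∀ m : ℤ, s1 - s3 ≠ 2 * π * m) → (∀ m : ℤ, s2 - s3 ≠ 2 * π * m) →
        F ((s1 : ℂ), (s2 : ℂ), (s3 : ℂ)) = Jsum N s1 s2 s3 := by
  refine ⟨?_, fun p => (N : ℂ) ^ 3 - N * (SE N (p.1 - p.2.1) ^ 2 + SE N (p.2.1 - p.2.2) ^ 2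
      + SE N (p.1 - p.2.2) ^ 2)
      + 2 * (SE N (p.1 - p.2.1) * SE N (p.2.1 - p.2.2) * SE N (p.1 - p.2.2)), ?_, ?_⟩
  · rw [Jsum_eq N _ _ _ (exp_ne_of _ _ h12) (exp_ne_of _ _ h13) (exp_ne_of _ _ h23),
      ← SN_eq N _ _ h12, ← SN_eq N _ _ h13, ← SN_eq N _ _ h23, Matrix.det_fin_three]
    simp only [Matrix.of_apply, Matrix.cons_val, sub_self, SN_zero]
    rw [SN_neg N t1 t2, SN_neg N t1 t3, SN_neg N t2 t3]
    push_cast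
    ring
  · have := SE_diff N
    fun_prop
  · intro s1 s2 s3 k12 k13 k23
    simp only
    rw [Jsum_eq N _ _ _ (exp_ne_of _ _ k12) (exp_ne_of _ _ k13) (exp_ne_of _ _ k23),
      SE_eq N _ _ k12, SE_eq N _ _ k13, SE_eq N _ _ k23]

end
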